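/- arXiv:2109.12687 — 2 statements merged into one kernel-verified Lean document; each statement's English description precedes it below -/
import Mathlib

section
/- Let φ : EuclideanSpace ℝ (Fin m) → EuclideanSpace ℝ (Fin (n+1)) be a smooth sphere-valued map (‖φ(x)‖ = 1 for all x) with constant energy density ∑_{i=1}^{m} ‖∂φ/∂xᵢ(x)‖² = c for all x, which satisfies the biharmonic equation Δ²φ(x) + 2c·Δφ(x) + (2c² − ⟨Δ²φ(x), φ(x)⟩)·φ(x) = 0 for all x. If moreover φ is a bi-eigenmap, i.e. there is a function λ : EuclideanSpace ℝ (Fin m) → ℝ with Δ²φ(x) = λ(x)·φ(x) for all x, then Δφ(x) = −c·φ(x) for all x (φ is an eigenmap, hence harmonic as a map into the sphere), and consequently λ(x) = c² for all x. -/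
open scoped RealInnerProductSpace

/-- Componentwise Laplacian of a map `EuclideanSpace ℝ (Fin m) → F` with respect to the
standard orthonormal coordinates: `Δφ(x) = ∑ i, ∂²φ/∂xᵢ²(x)`. -/
noncomputable def lap {m : ℕ} {F : Type*} [NormedAddCommGroup F] [NormedSpace ℝ F]
    (φ : EuclideanSpace ℝ (Fin m) → F) (x : EuclideanSpace ℝ (Fin m)) : F :=
  ∑ i : Fin m,
    fderiv ℝ (fun y => fderiv ℝ φ y (EuclideanSpace.single i 1)) x (EuclideanSpace.single i 1)

/-!
The inner product of `Δ²φ = λφ` with the unit vector `φ` is `λ`, so the `λ`-terms of the biharmonic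
equation cancel and `2c(Δφ + cφ) = 0` remains. This gives `Δφ = -cφ` if `c ≠ 0`, while `c = 0`
forces `dφ = 0`. Applying `Δ` once more yields `λφ = Δ²φ = c²φ`.
-/

section NormedSpace

variable {m : ℕ} {F : Type*} [NormedAddCommGroup F] [NormedSpace ℝ F]
  {φ : EuclideanSpace ℝ (Fin m) → F}

/-- The energy density `∑ i, ‖∂φ/∂xᵢ(x)‖²` of `φ` at `x`, normalised without the factor `1/2`. -/
noncomputable def energyDensity (φ : EuclideanSpace ℝ (Fin m) → F)
    (x : EuclideanSpace ℝ (Fin m)) : ℝ :=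
  ∑ i : Fin m, ‖fderiv ℝ φ x (EuclideanSpace.single i 1)‖ ^ 2

theorem partialDeriv_eq_zero_of_energyDensity_eq_zero {x : EuclideanSpace ℝ (Fin m)}
    (h : energyDensity φ x = 0) (i : Fin m) :
    fderiv ℝ φ x (EuclideanSpace.single i 1) = 0 := by
  have hsq : ‖fderiv ℝ φ x (EuclideanSpace.single i 1)‖ ^ 2 = 0 :=
    (Finset.sum_eq_zero_iff_of_nonneg fun _ _ => sq_nonneg _).1 h i (Finset.mem_univ i)
  exact norm_eq_zero.1 (sq_eq_zero_iff.1 hsq)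

theorem lap_eq_zero_of_energyDensity_eq_zero (h : ∀ x, energyDensity φ x = 0)
    (x : EuclideanSpace ℝ (Fin m)) : lap φ x = 0 := by
  simp [lap, fun y i => partialDeriv_eq_zero_of_energyDensity_eq_zero (h y) i]

theorem lap_const_smul (a : ℝ) (φ : EuclideanSpace ℝ (Fin m) → F)
    (x : EuclideanSpace ℝ (Fin m)) : lap (a • φ) x = a • lap φ x := by
  have hpartial (v : EuclideanSpace ℝ (Fin m)) :
      (fun y => fderiv ℝ (a • φ) y v) = a • fun y => fderiv ℝ φ y v := by
    ext y
    simp [fderiv_const_smul_field]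
  simp only [lap, hpartial]
  simp only [fderiv_const_smul_field, Pi.smul_apply, smul_apply, Finset.smul_sum]

theorem lap_lap_eq_sq_smul_of_lap_eq_smul {a : ℝ} (h : ∀ x, lap φ x = a • φ x)
    (x : EuclideanSpace ℝ (Fin m)) : lap (lap φ) x = a ^ 2 • φ x := by
  have hlap : lap φ = a • φ := funext h
  calc
    lap (lap φ) x = lap (a • φ) x := by rw [hlap]
    _ = a • lap φ x := lap_const_smul a φ x
    _ = a ^ 2 • φ x := by rw [h x, smul_smul, sq]

end NormedSpace

section InnerProductSpace

variable {m : ℕ} {F : Type*} [NormedAddCommGroup F] [InnerProductSpace ℝ F]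
  {φ : EuclideanSpace ℝ (Fin m) → F}

theorem lap_eq_neg_smul_of_biharmonic_of_lap_lap_eq_smul {c μ : ℝ}
    {x : EuclideanSpace ℝ (Fin m)} (hc : c ≠ 0) (hunit : ‖φ x‖ = 1)
    (hbiharm : lap (lap φ) x + (2 * c) • lap φ x +
      (2 * c ^ 2 - ⟪lap (lap φ) x, φ x⟫) • φ x = 0)
    (hbieigen : lap (lap φ) x = μ • φ x) :
    lap φ x = (-c) • φ x := by
  have hinner : ⟪lap (lap φ) x, φ x⟫ = μ := by
    rw [hbieigen, real_inner_smul_left, real_inner_self_eq_norm_sq, hunit, one_pow, mul_one]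
  have htension : (2 * c) • (lap φ x + c • φ x) = 0 := by
    rw [hinner, hbieigen] at hbiharm
    rw [← hbiharm]
    module
  have hzero : lap φ x + c • φ x = 0 :=
    (smul_eq_zero.1 htension).resolve_left (mul_ne_zero two_ne_zero hc)
  rw [eq_neg_of_add_eq_zero_left hzero, neg_smul]

theorem biharmonic_bieigenmap_is_eigenmap_general (_hφ : ContDiff ℝ 4 φ)
    (hsphere : ∀ x, ‖φ x‖ = 1) {c : ℝ} (henergy : ∀ x, energyDensity φ x = c)
    (hbiharm : ∀ x, lap (lap φ) x + (2 * c) • lap φ x +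
      (2 * c ^ 2 - ⟪lap (lap φ) x, φ x⟫) • φ x = 0)
    {lam : EuclideanSpace ℝ (Fin m) → ℝ} (hbieigen : ∀ x, lap (lap φ) x = lam x • φ x) :
    (∀ x, lap φ x = (-c) • φ x) ∧ ∀ x, lam x = c ^ 2 := by
  have heigen (x) : lap φ x = (-c) • φ x := by
    rcases eq_or_ne c 0 with rfl | hc
    · rw [lap_eq_zero_of_energyDensity_eq_zero henergy, neg_zero, zero_smul]
    · exact lap_eq_neg_smul_of_biharmonic_of_lap_lap_eq_smul hc (hsphere x) (hbiharm x)
        (hbieigen x)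
  refine ⟨heigen, fun x => ?_⟩
  have hφx : φ x ≠ 0 := norm_ne_zero_iff.1 (by rw [hsphere x]; exact one_ne_zero)
  have hlam : lam x • φ x = (-c) ^ 2 • φ x := by
    rw [← hbieigen x, lap_lap_eq_sq_smul_of_lap_eq_smul heigen]
  rw [smul_left_injective ℝ hφx hlam, neg_sq]

end InnerProductSpace

theorem biharmonic_bieigenmap_is_eigenmap {m n : ℕ}
    (φ : EuclideanSpace ℝ (Fin m) → EuclideanSpace ℝ (Fin (n + 1)))
    (hφ : ContDiff ℝ (⊤ : ℕ∞) φ) (hsphere : ∀ x, ‖φ x‖ = 1) (c : ℝ)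
    (henergy : ∀ x, ∑ i : Fin m, ‖fderiv ℝ φ x (EuclideanSpace.single i 1)‖ ^ 2 = c)
    (hbiharm : ∀ x, lap (lap φ) x + (2 * c) • lap φ x +
        (2 * c ^ 2 - ⟪lap (lap φ) x, φ x⟫) • φ x = 0)
    (lam : EuclideanSpace ℝ (Fin m) → ℝ)
    (hbieigen : ∀ x, lap (lap φ) x = lam x • φ x) :
    (∀ x, lap φ x = (-c) • φ x) ∧ (∀ x, lam x = c ^ 2) :=
  biharmonic_bieigenmap_is_eigenmap_general (contDiff_infty.1 hφ 4) hsphere henergy hbiharm hbieigen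
end

section
/- Let φ : EuclideanSpace ℝ (Fin m) → EuclideanSpace ℝ (Fin (n+1)) be a smooth sphere-valued map (‖φ(x)‖ = 1 for all x) with constant energy density ∑_{i=1}^{m} ‖∂φ/∂xᵢ(x)‖² = c for all x, which satisfies the biharmonic equation Δ²φ(x) + 2c·Δφ(x) + (2c² − ⟨Δ²φ(x), φ(x)⟩)·φ(x) = 0 for all x. If moreover φ is a buckling eigenmap, i.e. there is a function μ : EuclideanSpace ℝ (Fin m) → ℝ with Δ²φ(x) = −μ(x)·Δφ(x) for all x, then for every x either μ(x) = 2c or Δφ(x) + c·φ(x) = 0. -/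
/-!
Applying `Δ` to `⟪φ, φ⟫ = 1` gives `⟪Δφ, φ⟫ = -∑ ‖∂ᵢφ‖² = -c`. If also `Δ²φ = -μ Δφ`, then
`⟪Δ²φ, φ⟫ = μ c`, and the left-hand side of the biharmonic map equation factors as
`(2c - μ) (Δφ + c φ)`.
-/

open scoped RealInnerProductSpace

open scoped Topology

section SecondDerivatives

variable {E F : Type*} [NormedAddCommGroup E] [NormedSpace ℝ E]
  [NormedAddCommGroup F] [NormedSpace ℝ F]
  {G : Type*} [NormedAddCommGroup G] [InnerProductSpace ℝ G] {x : E}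

lemma differentiableAt_fderiv_apply {f : E → F} (hf : ContDiffAt ℝ 2 f x) (v : E) :
    DifferentiableAt ℝ (fun y => fderiv ℝ f y v) x :=
  (hf.fderiv_right_succ.differentiableAt one_ne_zero).clm_apply (differentiableAt_const v)

lemma fderiv_fderiv_inner_apply {f g : E → G}
    (hf : ContDiffAt ℝ 2 f x) (hg : ContDiffAt ℝ 2 g x) (v w : E) :
    fderiv ℝ (fun y => fderiv ℝ (fun z => ⟪f z, g z⟫) y v) x w =
      ⟪f x, fderiv ℝ (fun y => fderiv ℝ g y v) x w⟫ + ⟪fderiv ℝ f x w, fderiv ℝ g x v⟫ +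
        (⟪fderiv ℝ f x v, fderiv ℝ g x w⟫ + ⟪fderiv ℝ (fun y => fderiv ℝ f y v) x w, g x⟫) := by
  have hf' := hf.differentiableAt two_ne_zero
  have hg' := hg.differentiableAt two_ne_zero
  have hfv := differentiableAt_fderiv_apply hf v
  have hgv := differentiableAt_fderiv_apply hg v
  have first_derivative : (fun y => fderiv ℝ (fun z => ⟪f z, g z⟫) y v) =ᶠ[𝓝 x]
      fun y => ⟪f y, fderiv ℝ g y v⟫ + ⟪fderiv ℝ f y v, g y⟫ := by
    filter_upwards [hf.eventually (by simp), hg.eventually (by simp)] with y hfy hgy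
    exact fderiv_inner_apply ℝ (hfy.differentiableAt two_ne_zero)
      (hgy.differentiableAt two_ne_zero) v
  rw [first_derivative.fderiv_eq, fderiv_fun_add (hf'.inner ℝ hgv) (hfv.inner ℝ hg'),
    add_apply, fderiv_inner_apply ℝ hf' hgv, fderiv_inner_apply ℝ hfv hg']

end SecondDerivatives

section Laplacian

variable {m : ℕ} {F : Type*} [NormedAddCommGroup F] [NormedSpace ℝ F]
  {G : Type*} [NormedAddCommGroup G] [InnerProductSpace ℝ G] {x : EuclideanSpace ℝ (Fin m)}

lemma lap_const (a : F) : lap (fun _ : EuclideanSpace ℝ (Fin m) => a) x = 0 := by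
  simp [lap]

lemma lap_congr_of_eventuallyEq {f g : EuclideanSpace ℝ (Fin m) → F}
    (h : f =ᶠ[𝓝 x] g) : lap f x = lap g x := by
  refine Finset.sum_congr rfl fun i _ => ?_
  have partial_eq : (fun y => fderiv ℝ f y (EuclideanSpace.single i 1)) =ᶠ[𝓝 x]
      fun y => fderiv ℝ g y (EuclideanSpace.single i 1) :=
    h.fderiv.fun_comp fun L => L (EuclideanSpace.single i 1)
  rw [partial_eq.fderiv_eq]

lemma lap_inner {f g : EuclideanSpace ℝ (Fin m) → G}
    (hf : ContDiffAt ℝ 2 f x) (hg : ContDiffAt ℝ 2 g x) :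
    lap (fun y => ⟪f y, g y⟫) x = ⟪f x, lap g x⟫ +
      2 * ∑ i : Fin m, ⟪fderiv ℝ f x (EuclideanSpace.single i 1),
        fderiv ℝ g x (EuclideanSpace.single i 1)⟫ + ⟪lap f x, g x⟫ := by
  simp only [lap, fderiv_fderiv_inner_apply hf hg, Finset.sum_add_distrib, inner_sum, sum_inner]
  ring

lemma inner_lap_self_of_norm_eventually_eq {φ : EuclideanSpace ℝ (Fin m) → G} {r : ℝ}
    (hφ : ContDiffAt ℝ 2 φ x) (hr : ∀ᶠ y in 𝓝 x, ‖φ y‖ = r) :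
    ⟪lap φ x, φ x⟫ = -∑ i : Fin m, ‖fderiv ℝ φ x (EuclideanSpace.single i 1)‖ ^ 2 := by
  have inner_self_eq : (fun y => ⟪φ y, φ y⟫) =ᶠ[𝓝 x] fun _ => r ^ 2 :=
    hr.mono fun y hy => by simp [hy]
  have lap_inner_self : lap (fun y => ⟪φ y, φ y⟫) x = 0 := by
    rw [lap_congr_of_eventuallyEq inner_self_eq, lap_const]
  rw [lap_inner hφ hφ, real_inner_comm] at lap_inner_self
  simp only [real_inner_self_eq_norm_sq] at lap_inner_self
  linarith

theorem biharmonic_buckling_eigenmap_general {φ : EuclideanSpace ℝ (Fin m) → G} {c μ : ℝ}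
    (hφ : ContDiffAt ℝ 4 φ x) (hsphere : ∀ᶠ y in 𝓝 x, ‖φ y‖ = 1)
    (henergy : ∑ i : Fin m, ‖fderiv ℝ φ x (EuclideanSpace.single i 1)‖ ^ 2 = c)
    (hbiharm : lap (lap φ) x + (2 * c) • lap φ x +
      (2 * c ^ 2 - ⟪lap (lap φ) x, φ x⟫) • φ x = 0)
    (hbuckling : lap (lap φ) x = -μ • lap φ x) :
    μ = 2 * c ∨ lap φ x + c • φ x = 0 := by
  have inner_lap : ⟪lap φ x, φ x⟫ = -c := by
    rw [inner_lap_self_of_norm_eventually_eq (hφ.of_le (by norm_num)) hsphere, henergy]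
  have inner_bilap : ⟪lap (lap φ) x, φ x⟫ = μ * c := by
    rw [hbuckling, real_inner_smul_left, inner_lap, neg_mul_neg]
  have factorization : (2 * c - μ) • (lap φ x + c • φ x) = 0 := by
    rw [← hbiharm, inner_bilap, hbuckling]
    module
  exact (smul_eq_zero.mp factorization).imp_left fun h => (sub_eq_zero.mp h).symm

end Laplacian

theorem biharmonic_buckling_eigenmap {m n : ℕ}
    (φ : EuclideanSpace ℝ (Fin m) → EuclideanSpace ℝ (Fin (n + 1)))
    (hφ : ContDiff ℝ (⊤ : ℕ∞) φ) (hsphere : ∀ x, ‖φ x‖ = 1) (c : ℝ)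
    (henergy : ∀ x, ∑ i : Fin m, ‖fderiv ℝ φ x (EuclideanSpace.single i 1)‖ ^ 2 = c)
    (hbiharm : ∀ x, lap (lap φ) x + (2 * c) • lap φ x +
        (2 * c ^ 2 - ⟪lap (lap φ) x, φ x⟫) • φ x = 0)
    (μ : EuclideanSpace ℝ (Fin m) → ℝ)
    (hbuckling : ∀ x, lap (lap φ) x = -(μ x) • lap φ x) :
    ∀ x, μ x = 2 * c ∨ lap φ x + c • φ x = 0 := by
  intro x
  exact biharmonic_buckling_eigenmap_general (contDiff_infty.mp hφ 4).contDiffAt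
    (.of_forall hsphere) (henergy x) (hbiharm x) (hbuckling x)
end
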